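/- arXiv:1011.3696 — 2 statements merged into one kernel-verified Lean document; each statement's English description precedes it below -/
import Mathlib

section
/- Fix j ∈ {1,…,n} and let (ν,s), (ν',s') ∈ ℝ^d × ℝ satisfy: (a) ⟨ν,e_i⟩ > 0 and ⟨ν',e_i⟩ > 0 for all i; (b) for every r ∈ {1,…,j}, an r-element subset S ⊆ {1,…,n} satisfies Σ_{i∈S}⟨ν,e_i⟩ = ord_{C_r}(ν) if and only if it satisfies Σ_{i∈S}⟨ν',e_i⟩ = ord_{C_r}(ν') (ν and ν' define the same face of the Newton polyhedron of C_r); (c) φ_j(ν) ≤ s, and s < φ_{j+1}(ν) in case j < n; (d) φ_j(ν') ≤ s', and s' < φ_{j+1}(ν') in case j < n. Then {i : ⟨ν,e_i⟩ ≤ s} = {i : ⟨ν',e_i⟩ ≤ s'}. Consequently, if the e_i lie in ℤ^d, the subgroup M_ν^s of ℤ^d and the ℚ-subspace ℓ_ν^s coincide with M_{ν'}^{s'} and ℓ_{ν'}^{s'}; in particular the rank l(ν,s) and the index q(ν,s) agree for (ν,s) and (ν',s'). -/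
/-!
Let `S` be a `j`-element set of minimal total weight. Deleting `i ∈ S` gives a competitor for
`ord_{C_{j-1}}`, so `i` has weight at most `φ_j`; adjoining `i ∉ S` gives a competitor for
`ord_{C_{j+1}}`, so `i` has weight at least `φ_{j+1}`. Hence every threshold `s` with
`φ_j ≤ s < φ_{j+1}` cuts out exactly `S`, and two weightings with a common minimizer `S` have the
same sublevel set.
-/

/-- Support function of the Newton polyhedron of the `j`-th ideal of sums of
combinations, for integral vectors `e`. -/
noncomputable def ordC {d n : ℕ} (e : Fin n → Fin d → ℤ) (j : ℕ) (ν : Fin d → ℝ) : ℝ :=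
  sInf {x : ℝ | ∃ S : Finset (Fin n), S.card = j ∧ x = ∑ i ∈ S, ∑ k, ν k * (e i k : ℝ)}

/-- `φ_j := ord_{C_j} − ord_{C_{j−1}}` (with `ord_{C_0} = 0`). -/
noncomputable def phiC {d n : ℕ} (e : Fin n → Fin d → ℤ) (j : ℕ) (ν : Fin d → ℝ) : ℝ :=
  ordC e j ν - ordC e (j - 1) ν

section WeightedSubsets

variable {ι R : Type*}

theorem finite_setOf_sum_of_card_eq [Finite ι] [AddCommMonoid R] (w : ι → R) (j : ℕ) :
    {x : R | ∃ S : Finset ι, S.card = j ∧ x = ∑ i ∈ S, w i}.Finite := by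
  refine (Set.finite_range fun S : Finset ι => ∑ i ∈ S, w i).subset ?_
  rintro _ ⟨S, -, rfl⟩
  exact ⟨S, rfl⟩

variable [ConditionallyCompleteLinearOrder R] [AddCommGroup R]

/-- The least total weight of a `j`-element set of indices; for the weights `⟨ν, e_i⟩` it unfolds
to `ordC e j ν`. It is the junk value `sInf ∅` if there is no such set. -/
noncomputable def minCardSum (w : ι → R) (j : ℕ) : R :=
  sInf {x : R | ∃ S : Finset ι, S.card = j ∧ x = ∑ i ∈ S, w i}

/-- The increment of `minCardSum w` from `j - 1` to `j`, an abstract form of `phiC`. It is `0` at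
`j = 0`, where the subtraction of indices is truncated. -/
noncomputable def minCardSumStep (w : ι → R) (j : ℕ) : R :=
  minCardSum w j - minCardSum w (j - 1)

theorem minCardSum_card_le_sum [Finite ι] (w : ι → R) (S : Finset ι) :
    minCardSum w S.card ≤ ∑ i ∈ S, w i :=
  csInf_le (finite_setOf_sum_of_card_eq w S.card).bddBelow ⟨S, rfl, rfl⟩

theorem exists_sum_eq_minCardSum [Fintype ι] (w : ι → R) {j : ℕ}
    (hj : j ≤ Fintype.card ι) : ∃ S : Finset ι, S.card = j ∧ ∑ i ∈ S, w i = minCardSum w j := by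
  obtain ⟨T, -, hT⟩ := Finset.exists_subset_card_eq (s := (Finset.univ : Finset ι)) hj
  have hne : {x : R | ∃ S : Finset ι, S.card = j ∧ x = ∑ i ∈ S, w i}.Nonempty := ⟨_, T, hT, rfl⟩
  obtain ⟨S, hS, hsum⟩ := hne.csInf_mem (finite_setOf_sum_of_card_eq w j)
  exact ⟨S, hS, hsum.symm⟩

variable [IsOrderedAddMonoid R] {w : ι → R} {S : Finset ι} {s : R}

theorem le_minCardSumStep_of_mem [Finite ι] (hS : ∑ i ∈ S, w i = minCardSum w S.card) {i : ι}
    (hi : i ∈ S) : w i ≤ minCardSumStep w S.card := by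
  classical
  refine le_sub_iff_add_le.2 ?_
  calc
    w i + minCardSum w (S.card - 1) ≤ w i + ∑ k ∈ S.erase i, w k := by
      rw [← Finset.card_erase_of_mem hi]
      gcongr
      exact minCardSum_card_le_sum w _
    _ = minCardSum w S.card := by rw [Finset.add_sum_erase S w hi, hS]

theorem minCardSumStep_succ_le_of_notMem [Finite ι] (hS : ∑ i ∈ S, w i = minCardSum w S.card)
    {i : ι} (hi : i ∉ S) : minCardSumStep w (S.card + 1) ≤ w i := by
  classical
  refine sub_le_iff_le_add.2 ?_
  calc
    minCardSum w (S.card + 1) ≤ ∑ k ∈ insert i S, w k := by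
      rw [← Finset.card_insert_of_notMem hi]
      exact minCardSum_card_le_sum w _
    _ = w i + minCardSum w S.card := by rw [Finset.sum_insert hi, hS]

theorem le_iff_mem_of_sum_eq_minCardSum [Fintype ι]
    (hS : ∑ i ∈ S, w i = minCardSum w S.card) (hle : minCardSumStep w S.card ≤ s)
    (hlt : S.card < Fintype.card ι → s < minCardSumStep w (S.card + 1)) (i : ι) :
    w i ≤ s ↔ i ∈ S := by
  refine ⟨fun hi => ?_, fun hi => (le_minCardSumStep_of_mem hS hi).trans hle⟩
  by_contra hiS
  have hs : s < w i := (hlt (Finset.card_lt_univ_of_notMem hiS)).trans_le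
    (minCardSumStep_succ_le_of_notMem hS hiS)
  exact hs.not_ge hi

theorem stmt5_general [Fintype ι] {G K V : Type*} [AddGroup G] [Semiring K] [AddCommMonoid V]
    [Module K V] (g : ι → G) (v : ι → V) {w' : ι → R} {s' : R}
    (hS : ∑ i ∈ S, w i = minCardSum w S.card) (hS' : ∑ i ∈ S, w' i = minCardSum w' S.card)
    (hle : minCardSumStep w S.card ≤ s)
    (hlt : S.card < Fintype.card ι → s < minCardSumStep w (S.card + 1))
    (hle' : minCardSumStep w' S.card ≤ s')
    (hlt' : S.card < Fintype.card ι → s' < minCardSumStep w' (S.card + 1)) :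
    {i | w i ≤ s} = {i | w' i ≤ s'} ∧
    AddSubgroup.closure {x | ∃ i, w i ≤ s ∧ x = g i} =
      AddSubgroup.closure {x | ∃ i, w' i ≤ s' ∧ x = g i} ∧
    Submodule.span K {x | ∃ i, w i ≤ s ∧ x = v i} =
      Submodule.span K {x | ∃ i, w' i ≤ s' ∧ x = v i} := by
  have hiff (i : ι) : w i ≤ s ↔ w' i ≤ s' :=
    (le_iff_mem_of_sum_eq_minCardSum hS hle hlt i).trans
      (le_iff_mem_of_sum_eq_minCardSum hS' hle' hlt' i).symm
  simp only [hiff, and_self]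

end WeightedSubsets

theorem stmt5 (d n : ℕ) (e : Fin n → Fin d → ℤ)
    (j : ℕ) (hj1 : 1 ≤ j) (hjn : j ≤ n)
    (ν ν' : Fin d → ℝ) (s s' : ℝ)
    (ha : ∀ i, 0 < ∑ k, ν k * (e i k : ℝ)) (ha' : ∀ i, 0 < ∑ k, ν' k * (e i k : ℝ))
    (hb : ∀ r : ℕ, 1 ≤ r → r ≤ j → ∀ S : Finset (Fin n), S.card = r →
      ((∑ i ∈ S, ∑ k, ν k * (e i k : ℝ)) = ordC e r ν ↔
        (∑ i ∈ S, ∑ k, ν' k * (e i k : ℝ)) = ordC e r ν'))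
    (hc1 : phiC e j ν ≤ s) (hc2 : j < n → s < phiC e (j + 1) ν)
    (hd1 : phiC e j ν' ≤ s') (hd2 : j < n → s' < phiC e (j + 1) ν') :
    {i : Fin n | ∑ k, ν k * (e i k : ℝ) ≤ s} = {i : Fin n | ∑ k, ν' k * (e i k : ℝ) ≤ s'} ∧
    AddSubgroup.closure {x : Fin d → ℤ | ∃ i, (∑ k, ν k * (e i k : ℝ)) ≤ s ∧ x = e i} =
      AddSubgroup.closure {x : Fin d → ℤ | ∃ i, (∑ k, ν' k * (e i k : ℝ)) ≤ s' ∧ x = e i} ∧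
    Submodule.span ℚ {x : Fin d → ℚ |
        ∃ i, (∑ k, ν k * (e i k : ℝ)) ≤ s ∧ x = fun kk => (e i kk : ℚ)} =
      Submodule.span ℚ {x : Fin d → ℚ |
        ∃ i, (∑ k, ν' k * (e i k : ℝ)) ≤ s' ∧ x = fun kk => (e i kk : ℚ)} := by
  have hcard : Fintype.card (Fin n) = n := Fintype.card_fin n
  obtain ⟨S, rfl, hS⟩ :=
    exists_sum_eq_minCardSum (fun i => ∑ k, ν k * (e i k : ℝ)) (hjn.trans_eq hcard.symm)
  exact stmt5_general e (fun i kk => (e i kk : ℚ)) hS ((hb S.card hj1 le_rfl S rfl).1 hS)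
    hc1 (hcard.symm ▸ hc2) hd1 (hcard.symm ▸ hd2)
end

section
/- Let e_1,…,e_n ∈ ℤ^d and fix j ∈ {1,…,n}. Let (ν,s) and (ν',s') satisfy hypotheses (a)–(d): ⟨ν,e_i⟩ > 0 and ⟨ν',e_i⟩ > 0 for all i; for every r ∈ {1,…,j} the minimizing r-element subsets of Σ_{i∈S}⟨ν,e_i⟩ and of Σ_{i∈S}⟨ν',e_i⟩ coincide; φ_j(ν) ≤ s with s < φ_{j+1}(ν) if j < n; and φ_j(ν') ≤ s' with s' < φ_{j+1}(ν') if j < n. Let l be the dimension of the ℚ-span of {e_i : ⟨ν,e_i⟩ ≤ s}. Then l also equals the dimension of the ℚ-span of {e_i : ⟨ν',e_i⟩ ≤ s'}, and for every r ∈ {1,…,l}, an r-element subset S ⊆ {1,…,n} with (e_i)_{i∈S} linearly independent satisfies Σ_{i∈S}⟨ν,e_i⟩ = ord_{J_r}(ν) if and only if it satisfies Σ_{i∈S}⟨ν',e_i⟩ = ord_{J_r}(ν'); that is, ν and ν' define the same face of the Newton polyhedron of the r-th logarithmic jacobian ideal for every r ≤ l. -/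
/-- Support function of the Newton polyhedron of the `r`-th logarithmic jacobian
ideal: minimum over `r`-element subsets `S` with `(e i)_{i ∈ S}` linearly
independent of `∑_{i∈S} ⟨ν, e i⟩`. -/
noncomputable def ordJ {d n : ℕ} (e : Fin n → Fin d → ℤ) (r : ℕ) (ν : Fin d → ℝ) : ℝ :=
  sInf {x : ℝ | ∃ S : Finset (Fin n), S.card = r ∧
    LinearIndependent ℝ (fun i : S => ((fun kk => (e i.1 kk : ℝ)) : Fin d → ℝ)) ∧
    x = ∑ i ∈ S, ∑ k, ν k * (e i k : ℝ)}

/-!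
The numbers `⟨ν, e i⟩` may be replaced by arbitrary real weights `w i`.

The jumps of the minimal sums are the sorted weights, so `φ_j ≤ s < φ_{j+1}` makes `{i | w i ≤ s}`
the minimizing `j`-element set, and the minimizing sets of size at most `j` determine the order of
the weights on it. An independent set `S` has minimal weight among those of its size exactly when it
is greedy: for every `a ∈ S`, each vector lighter than `a` lies in the span of the elements of `S`
lighter than `a`. If `#S` is at most the rank of `{i | w i ≤ s}`, a greedy `S` lies inside this
sublevel set, and then being greedy depends only on the order of the weights there.
-/

open Finset

section Weights

variable {ι R : Type*} [AddCommGroup R] [LinearOrder R] [IsOrderedAddMonoid R] {w w' : ι → R}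

theorem isMinOn_sum_card_of_threshold {c : R} {B : Finset ι} (hle : ∀ i ∈ B, w i ≤ c)
    (hge : ∀ i ∉ B, c ≤ w i) : IsMinOn (∑ i ∈ ·, w i) {T | T.card = B.card} B := by
  classical
  intro T hT
  have hB : ∑ i ∈ B \ T, w i ≤ (B \ T).card • c :=
    sum_le_card_nsmul _ _ _ fun i hi => hle i (mem_sdiff.1 hi).1
  have hT' : (T \ B).card • c ≤ ∑ i ∈ T \ B, w i :=
    card_nsmul_le_sum _ _ _ fun i hi => hge i (mem_sdiff.1 hi).2
  rw [card_sdiff_comm hT] at hT'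
  rw [Set.mem_ofPred_eq, ← sub_nonpos, ← sum_sdiff_sub_sum_sdiff, sub_nonpos]
  exact hB.trans hT'

theorem card_insert_erase [DecidableEq ι] {S : Finset ι} {a b : ι} (ha : a ∈ S) (hb : b ∉ S) :
    (insert b (S.erase a)).card = S.card := by
  rw [card_insert_of_notMem (mt mem_of_mem_erase hb), card_erase_add_one ha]

theorem le_of_isMinOn_sum_of_insert_erase_mem [DecidableEq ι] {F : Set (Finset ι)} {S : Finset ι}
    (hS : IsMinOn (∑ i ∈ ·, w i) F S) {a b : ι} (ha : a ∈ S) (hb : b ∉ S)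
    (hF : insert b (S.erase a) ∈ F) : w a ≤ w b := by
  have hle : ∑ i ∈ S, w i ≤ ∑ i ∈ insert b (S.erase a), w i := hS hF
  rw [← add_sum_erase S w ha, sum_insert (mt mem_of_mem_erase hb)] at hle
  exact le_of_add_le_add_right hle

theorem le_of_le_of_forall_isMinOn_sum_card {s : R} {A : Finset ι} (hA : ∀ i, i ∈ A ↔ w i ≤ s)
    (hmin : ∀ S : Finset ι, S.Nonempty → S.card ≤ A.card →
      IsMinOn (∑ i ∈ ·, w i) {T | T.card = S.card} S →
        IsMinOn (∑ i ∈ ·, w' i) {T | T.card = S.card} S)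
    {a b : ι} (ha : a ∈ A) (hb : b ∈ A) (hab : w a ≤ w b) : w' a ≤ w' b := by
  classical
  rcases eq_or_ne a b with rfl | hne
  · exact le_rfl
  -- `B` minimizes `w`, hence `w'`, among the sets of its size: replacing `a` by `b` cannot pay.
  set B : Finset ι := insert a {i ∈ A | w i < w b} with hB
  have haB : a ∈ B := mem_insert_self _ _
  have hbB : b ∉ B := by simp [hB, hne.symm]
  have hBA : B ⊆ A := insert_subset ha (filter_subset _ _)
  have hle : ∀ i ∈ B, w i ≤ w b := (forall_mem_insert ..).2
    ⟨hab, fun i hi => (mem_filter.1 hi).2.le⟩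
  have hge : ∀ i ∉ B, w b ≤ w i := by
    intro i hi
    by_contra! hlt
    have hiA : i ∈ A := (hA i).2 (hlt.le.trans ((hA b).1 hb))
    exact hi (mem_insert_of_mem (mem_filter.2 ⟨hiA, hlt⟩))
  exact le_of_isMinOn_sum_of_insert_erase_mem
    (hmin B ⟨a, haB⟩ (card_le_card hBA) (isMinOn_sum_card_of_threshold hle hge)) haB hbB
    (card_insert_erase haB hbB)

end Weights

section Independence

variable {K V ι : Type*} [DivisionRing K] [AddCommGroup V] [Module K V] {v : ι → V}

theorem finrank_span_image_finset_le_card (S : Finset ι) :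
    Module.finrank K (Submodule.span K (v '' S)) ≤ S.card := by
  classical
  rw [← coe_image]
  exact (finrank_span_finset_le_card _).trans card_image_le

theorem finrank_span_image_finset_eq_card {S : Finset ι} (hS : LinearIndepOn K v (S : Set ι)) :
    Module.finrank K (Submodule.span K (v '' S)) = S.card := by
  rw [Set.image_eq_range]
  exact (finrank_span_eq_card hS).trans (Fintype.card_coe S)

theorem card_le_card_of_subset_span_image {S T : Finset ι} (hS : LinearIndepOn K v (S : Set ι))
    (h : v '' S ⊆ Submodule.span K (v '' T)) : S.card ≤ T.card := by
  have : Module.Finite K (Submodule.span K (v '' T)) :=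
    Module.Finite.span_of_finite K (T.finite_toSet.image v)
  rw [← finrank_span_image_finset_eq_card hS]
  exact (Submodule.finrank_mono (Submodule.span_le.2 h)).trans (finrank_span_image_finset_le_card T)

theorem exists_linearIndepOn_superset_card_eq [DecidableEq ι] {I J : Finset ι}
    (hI : LinearIndepOn K v (I : Set ι)) (hJ : LinearIndepOn K v (J : Set ι))
    (hcard : I.card ≤ J.card) :
    ∃ U, I ⊆ U ∧ U ⊆ I ∪ J ∧ U.card = J.card ∧ LinearIndepOn K v (U : Set ι) := by
  obtain ⟨W, hWsub, hIW, hspan, hW⟩ :=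
    exists_linearIndepOn_extension hI (coe_subset.2 (subset_union_left : I ⊆ I ∪ J))
  lift W to Finset ι using (finite_toSet _).subset hWsub
  have hJW : J.card ≤ W.card := card_le_card_of_subset_span_image hJ
    ((Set.image_mono (coe_subset.2 subset_union_right)).trans hspan)
  obtain ⟨U, hIU, hUW, hU⟩ := exists_subsuperset_card_eq (coe_subset.1 hIW) hcard hJW
  exact ⟨U, hIU, hUW.trans (coe_subset.1 hWsub), hU, hW.mono (coe_subset.2 hUW)⟩

variable (K v) in
/-- The linearly independent subfamilies of size `r` of `v`, as sets of indices: the exponents of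
the `r`-th logarithmic jacobian ideal are the sums over such subfamilies. -/
def indepSets (r : ℕ) : Set (Finset ι) :=
  {S | S.card = r ∧ LinearIndepOn K v (S : Set ι)}

end Independence

section Greedy

variable {K V ι R : Type*} [DivisionRing K] [AddCommGroup V] [Module K V] {v : ι → V}
  [LinearOrder R] {w w' : ι → R} {S T A : Finset ι}

variable (K v w) in
/-- The condition that `S` could be produced by the greedy algorithm, which picks vectors in order
of increasing weight `w` and skips those in the span of the vectors already chosen. Linear
independence of `S` is not part of the condition. -/
def IsGreedy (S : Finset ι) : Prop :=
  ∀ a ∈ S, ∀ b, w b < w a → v b ∈ Submodule.span K (v '' ({i ∈ S | w i < w a} : Finset ι))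

namespace IsGreedy

theorem exists_le (hS : IsGreedy K v w S) {a : ι} (ha : a ∈ S) {X : Set ι}
    (hX : S.card ≤ Module.finrank K (Submodule.span K (v '' X))) : ∃ b ∈ X, w a ≤ w b := by
  by_contra! hlt
  set L : Finset ι := {i ∈ S | w i < w a}
  have : Module.Finite K (Submodule.span K (v '' L)) :=
    Module.Finite.span_of_finite K (L.finite_toSet.image v)
  have hspan : Submodule.span K (v '' X) ≤ Submodule.span K (v '' L) :=
    Submodule.span_le.2 (Set.image_subset_iff.2 fun b hb => hS a ha b (hlt b hb))
  have hL : L.card < S.card := card_lt_card (filter_ssubset.2 ⟨a, ha, lt_irrefl _⟩)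
  exact hL.not_ge (hX.trans ((Submodule.finrank_mono hspan).trans
    (finrank_span_image_finset_le_card L)))

theorem of_insert_max [DecidableEq ι] {a : ι} (hS : IsGreedy K v w (insert a S))
    (hmax : ∀ i ∈ S, w i ≤ w a) : IsGreedy K v w S := by
  intro c hc b hbc
  have hb := hS c (mem_insert_of_mem hc) b hbc
  rwa [filter_insert, if_neg (hmax c hc).not_gt] at hb

theorem subset_sublevel (hS : IsGreedy K v w S) {s : R} (hA : ∀ i, i ∈ A ↔ w i ≤ s)
    (hrank : S.card ≤ Module.finrank K (Submodule.span K (v '' A))) : S ⊆ A := by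
  intro a ha
  obtain ⟨b, hbA, hab⟩ := hS.exists_le ha hrank
  exact (hA a).2 (hab.trans ((hA b).1 hbA))

theorem of_sublevel (hS : IsGreedy K v w S) {s s' : R} (hA : ∀ i, i ∈ A ↔ w i ≤ s)
    (hA' : ∀ i, i ∈ A ↔ w' i ≤ s') (hord : ∀ a ∈ A, ∀ b ∈ A, (w a ≤ w b ↔ w' a ≤ w' b))
    (hrank : S.card ≤ Module.finrank K (Submodule.span K (v '' A))) : IsGreedy K v w' S := by
  have hSA : S ⊆ A := hS.subset_sublevel hA hrank
  have hlt : ∀ a ∈ A, ∀ b ∈ A, (w b < w a ↔ w' b < w' a) := fun a ha b hb =>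
    lt_iff_lt_of_le_iff_le (hord a ha b hb)
  intro a ha b hba
  have hbA : b ∈ A := (hA' b).2 (hba.le.trans ((hA' a).1 (hSA ha)))
  rw [← filter_congr fun i hi => hlt a (hSA ha) i (hSA hi)]
  exact hS a ha b ((hlt a (hSA ha) b hbA).2 hba)

variable [AddCommGroup R] [IsOrderedAddMonoid R]

theorem sum_le_sum (hS : IsGreedy K v w S) (hT : LinearIndepOn K v (T : Set ι))
    (hcard : T.card = S.card) : ∑ i ∈ S, w i ≤ ∑ i ∈ T, w i := by
  classical
  induction S using induction_on_max_value w generalizing T with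
  | empty => simp_all
  | insert a S haS hmax ih =>
    -- Otherwise the elements of `S` lighter than `a` would span all of `T`.
    obtain ⟨b, hbT, hab⟩ : ∃ b ∈ T, w a ≤ w b :=
      hS.exists_le (mem_insert_self a S) (finrank_span_image_finset_eq_card hT ▸ hcard.ge)
    have hcard' : (T.erase b).card = S.card := by
      rw [card_erase_of_mem hbT, hcard, card_insert_of_notMem haS, Nat.add_sub_cancel]
    rw [sum_insert haS, ← add_sum_erase T w hbT]
    exact add_le_add hab
      (ih (hS.of_insert_max hmax) (hT.mono (coe_subset.2 (erase_subset b T))) hcard')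

end IsGreedy

variable [AddCommGroup R] [IsOrderedAddMonoid R]

theorem isGreedy_of_isMinOn_sum (hS : LinearIndepOn K v (S : Set ι))
    (hmin : IsMinOn (∑ i ∈ ·, w i) (indepSets K v S.card) S) : IsGreedy K v w S := by
  classical
  intro a ha b hba
  set L : Finset ι := {i ∈ S | w i < w a}
  by_contra hb
  have hbS : b ∉ S := fun hbS => hb (Submodule.subset_span ⟨b, mem_filter.2 ⟨hbS, hba⟩, rfl⟩)
  have hL : L.card < S.card := card_lt_card (filter_ssubset.2 ⟨a, ha, lt_irrefl _⟩)
  have hbL : LinearIndepOn K v (insert b L : Finset ι) := by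
    rw [coe_insert]
    exact (hS.mono (coe_subset.2 (filter_subset _ _))).insert hb
  obtain ⟨U, hbLU, hUS, hUcard, hU⟩ :=
    exists_linearIndepOn_superset_card_eq hbL hS ((card_insert_le b L).trans hL)
  -- `U` has one element less than `insert b S`, and the missing one, `c`, is heavier than `b`.
  obtain ⟨c, hcS, hcU⟩ : ∃ c ∈ S, c ∉ U := not_subset.1 fun hSU =>
    hbS (eq_of_subset_of_card_le hSU hUcard.le ▸ hbLU (mem_insert_self b L))
  have hac : w a ≤ w c := not_lt.1 fun hca =>
    hcU (hbLU (mem_insert_of_mem (mem_filter.2 ⟨hcS, hca⟩)))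
  have hUeq : U = insert b (S.erase c) := by
    refine eq_of_subset_of_card_le (fun i hi => ?_) (by rw [card_insert_erase hcS hbS, hUcard])
    have hic : i ≠ c := ne_of_mem_of_not_mem hi hcU
    have := hUS hi
    grind
  have hcb : w c ≤ w b :=
    le_of_isMinOn_sum_of_insert_erase_mem hmin hcS hbS (hUeq ▸ ⟨hUcard, hU⟩)
  exact (hac.trans hcb).not_gt hba

theorem isMinOn_sum_indepSets_iff_isGreedy (hS : LinearIndepOn K v (S : Set ι)) :
    IsMinOn (∑ i ∈ ·, w i) (indepSets K v S.card) S ↔ IsGreedy K v w S :=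
  ⟨isGreedy_of_isMinOn_sum hS, fun h _ hT => h.sum_le_sum hT.2 hT.1⟩

end Greedy

section MinSum

variable {ι : Type*}

/-- The minimal weight of a set in the family `F`. For the weights `⟨ν, e i⟩` this is `ord_{C_r}`
when `F` consists of all `r`-element sets, and `ord_{J_r}` when `F` is `indepSets K e r`. It is the
junk value `0` when `F` is empty. -/
noncomputable def minSum (F : Set (Finset ι)) (w : ι → ℝ) : ℝ :=
  sInf {x | ∃ S, S ∈ F ∧ x = ∑ i ∈ S, w i}

variable [Finite ι] {F : Set (Finset ι)} {w : ι → ℝ} {S : Finset ι}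

theorem minSum_le_sum (hS : S ∈ F) : minSum F w ≤ ∑ i ∈ S, w i := by
  have hfin : {x | ∃ S, S ∈ F ∧ x = ∑ i ∈ S, w i}.Finite :=
    (Set.finite_range (∑ i ∈ ·, w i)).subset (by rintro _ ⟨T, -, rfl⟩; exact ⟨T, rfl⟩)
  exact csInf_le hfin.bddBelow ⟨S, hS, rfl⟩

theorem sum_eq_minSum_iff (hS : S ∈ F) :
    ∑ i ∈ S, w i = minSum F w ↔ IsMinOn (∑ i ∈ ·, w i) F S := by
  constructor
  · intro h T hT
    exact h.trans_le (minSum_le_sum hT)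
  · intro h
    refine le_antisymm (le_csInf ⟨_, S, hS, rfl⟩ ?_) (minSum_le_sum hS)
    rintro _ ⟨T, hT, rfl⟩
    exact h hT

theorem exists_mem_sum_eq_minSum (hF : F.Nonempty) : ∃ S ∈ F, ∑ i ∈ S, w i = minSum F w := by
  obtain ⟨S, hS, hmin⟩ := Set.exists_min_image F (∑ i ∈ ·, w i) (Set.toFinite F) hF
  exact ⟨S, hS, (sum_eq_minSum_iff hS).2 hmin⟩

theorem le_iff_le_of_forall_sum_eq_minSum_card_iff {w' : ι → ℝ} {A : Finset ι} {s s' : ℝ}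
    (hA : ∀ i, i ∈ A ↔ w i ≤ s) (hA' : ∀ i, i ∈ A ↔ w' i ≤ s')
    (hmin : ∀ r, 1 ≤ r → r ≤ A.card → ∀ S : Finset ι, S.card = r →
      (∑ i ∈ S, w i = minSum {T | T.card = r} w ↔ ∑ i ∈ S, w' i = minSum {T | T.card = r} w')) :
    ∀ a ∈ A, ∀ b ∈ A, (w a ≤ w b ↔ w' a ≤ w' b) := by
  have hiff (S : Finset ι) (hS : S.Nonempty) (hSA : S.card ≤ A.card) :
      IsMinOn (∑ i ∈ ·, w i) {T | T.card = S.card} S ↔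
        IsMinOn (∑ i ∈ ·, w' i) {T | T.card = S.card} S := by
    have hmem : S ∈ {T : Finset ι | T.card = S.card} := rfl
    rw [← sum_eq_minSum_iff hmem, ← sum_eq_minSum_iff hmem, hmin _ hS.card_pos hSA S rfl]
  exact fun a ha b hb =>
    ⟨le_of_le_of_forall_isMinOn_sum_card hA (fun S hS hSA => (hiff S hS hSA).1) ha hb,
      le_of_le_of_forall_isMinOn_sum_card hA' (fun S hS hSA => (hiff S hS hSA).2) ha hb⟩

theorem sum_eq_minSum_indepSets_iff_isGreedy {K V : Type*} [DivisionRing K] [AddCommGroup V]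
    [Module K V] {v : ι → V} (hS : LinearIndepOn K v (S : Set ι)) :
    ∑ i ∈ S, w i = minSum (indepSets K v S.card) w ↔ IsGreedy K v w S :=
  have hmem : S ∈ indepSets K v S.card := ⟨rfl, hS⟩
  (sum_eq_minSum_iff hmem).trans (isMinOn_sum_indepSets_iff_isGreedy hS)

end MinSum

theorem mem_iff_le_of_sum_eq_minSum_card {ι : Type*} [Fintype ι] {w : ι → ℝ} {S : Finset ι}
    {s : ℝ} (hS : ∑ i ∈ S, w i = minSum {T | T.card = S.card} w)
    (hle : minSum {T | T.card = S.card} w - minSum {T | T.card = S.card - 1} w ≤ s)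
    (hlt : S.card < Fintype.card ι →
      s < minSum {T | T.card = S.card + 1} w - minSum {T | T.card = S.card} w) (i : ι) :
    i ∈ S ↔ w i ≤ s := by
  classical
  constructor
  · intro hi
    have herase : minSum {T | T.card = S.card - 1} w ≤ ∑ k ∈ S.erase i, w k :=
      minSum_le_sum (card_erase_of_mem hi)
    have hsum := add_sum_erase S w hi
    linarith
  · contrapose!
    intro hi
    have hinsert : minSum {T | T.card = S.card + 1} w ≤ ∑ k ∈ insert i S, w k :=
      minSum_le_sum (card_insert_of_notMem hi)
    rw [sum_insert hi] at hinsert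
    have hlt' := hlt (card_lt_univ_of_notMem hi)
    linarith

theorem linearIndependent_intCast_real_iff {ι κ : Type*} [Finite κ] {e : ι → κ → ℤ}
    {S : Finset ι} :
    LinearIndependent ℝ (fun i : S => ((fun k => (e i.1 k : ℝ)) : κ → ℝ)) ↔
      LinearIndepOn ℚ (fun i k => (e i k : ℚ)) (S : Set ι) := by
  have hbase := linearIndependent_algebraMap_comp_iff (S := ℝ)
    (v := fun (i : (S : Set ι)) k => (e i.1 k : ℚ))
  simpa [LinearIndepOn, Function.comp_def] using hbase

theorem ordJ_eq_minSum {d n : ℕ} (e : Fin n → Fin d → ℤ) (r : ℕ) (ν : Fin d → ℝ) :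
    ordJ e r ν = minSum (indepSets ℚ (fun i k => (e i k : ℚ)) r)
      (fun i => ∑ k, ν k * (e i k : ℝ)) := by
  simp only [ordJ, minSum, indepSets, linearIndependent_intCast_real_iff, Set.mem_ofPred_eq,
    and_assoc]

theorem stmt7_general {K V ι : Type*} [DivisionRing K] [AddCommGroup V] [Module K V] [Fintype ι]
    (v : ι → V) {w w' : ι → ℝ} {s s' : ℝ} {j : ℕ} (hj : 1 ≤ j) (hjι : j ≤ Fintype.card ι)
    (hb : ∀ r, 1 ≤ r → r ≤ j → ∀ S : Finset ι, S.card = r →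
      (∑ i ∈ S, w i = minSum {T | T.card = r} w ↔ ∑ i ∈ S, w' i = minSum {T | T.card = r} w'))
    (hc₁ : minSum {T | T.card = j} w - minSum {T | T.card = j - 1} w ≤ s)
    (hc₂ : j < Fintype.card ι → s < minSum {T | T.card = j + 1} w - minSum {T | T.card = j} w)
    (hd₁ : minSum {T | T.card = j} w' - minSum {T | T.card = j - 1} w' ≤ s')
    (hd₂ : j < Fintype.card ι →
      s' < minSum {T | T.card = j + 1} w' - minSum {T | T.card = j} w') :
    Module.finrank K (Submodule.span K {x | ∃ i, w i ≤ s ∧ x = v i}) =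
      Module.finrank K (Submodule.span K {x | ∃ i, w' i ≤ s' ∧ x = v i}) ∧
    ∀ r ≤ Module.finrank K (Submodule.span K {x | ∃ i, w i ≤ s ∧ x = v i}),
      ∀ S ∈ indepSets K v r,
        (∑ i ∈ S, w i = minSum (indepSets K v r) w ↔
          ∑ i ∈ S, w' i = minSum (indepSets K v r) w') := by
  obtain ⟨A, rfl, hAmin⟩ : ∃ A ∈ {T : Finset ι | T.card = j},
      ∑ i ∈ A, w i = minSum {T | T.card = j} w :=
    exists_mem_sum_eq_minSum ((exists_subset_card_eq (s := univ) hjι).imp fun _ hT => hT.2)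
  have hA := mem_iff_le_of_sum_eq_minSum_card hAmin hc₁ hc₂
  have hA' := mem_iff_le_of_sum_eq_minSum_card ((hb _ hj le_rfl A rfl).1 hAmin) hd₁ hd₂
  have himage : {x | ∃ i, w i ≤ s ∧ x = v i} = v '' A := by ext x; simp [hA, eq_comm]
  have himage' : {x | ∃ i, w' i ≤ s' ∧ x = v i} = v '' A := by ext x; simp [hA', eq_comm]
  have hord := le_iff_le_of_forall_sum_eq_minSum_card_iff hA hA' hb
  rw [himage, himage']
  refine ⟨rfl, ?_⟩
  rintro _ hrank S ⟨rfl, hS⟩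
  rw [sum_eq_minSum_indepSets_iff_isGreedy hS, sum_eq_minSum_indepSets_iff_isGreedy hS]
  exact ⟨fun h => h.of_sublevel hA hA' hord hrank,
    fun h => h.of_sublevel hA' hA (fun a ha b hb => (hord a ha b hb).symm) hrank⟩

theorem stmt7 (d n : ℕ) (e : Fin n → Fin d → ℤ)
    (j : ℕ) (hj1 : 1 ≤ j) (hjn : j ≤ n)
    (ν ν' : Fin d → ℝ) (s s' : ℝ)
    (ha : ∀ i, 0 < ∑ k, ν k * (e i k : ℝ)) (ha' : ∀ i, 0 < ∑ k, ν' k * (e i k : ℝ))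
    (hb : ∀ r : ℕ, 1 ≤ r → r ≤ j → ∀ S : Finset (Fin n), S.card = r →
      ((∑ i ∈ S, ∑ k, ν k * (e i k : ℝ)) = ordC e r ν ↔
        (∑ i ∈ S, ∑ k, ν' k * (e i k : ℝ)) = ordC e r ν'))
    (hc1 : phiC e j ν ≤ s) (hc2 : j < n → s < phiC e (j + 1) ν)
    (hd1 : phiC e j ν' ≤ s') (hd2 : j < n → s' < phiC e (j + 1) ν')
    (l : ℕ)
    (hl : l = Module.finrank ℚ (Submodule.span ℚ {x : Fin d → ℚ |
      ∃ i, (∑ k, ν k * (e i k : ℝ)) ≤ s ∧ x = fun kk => (e i kk : ℚ)})) :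
    l = Module.finrank ℚ (Submodule.span ℚ {x : Fin d → ℚ |
      ∃ i, (∑ k, ν' k * (e i k : ℝ)) ≤ s' ∧ x = fun kk => (e i kk : ℚ)}) ∧
    ∀ r : ℕ, 1 ≤ r → r ≤ l → ∀ S : Finset (Fin n), S.card = r →
      LinearIndependent ℝ (fun i : S => ((fun kk => (e i.1 kk : ℝ)) : Fin d → ℝ)) →
      ((∑ i ∈ S, ∑ k, ν k * (e i k : ℝ)) = ordJ e r ν ↔
        (∑ i ∈ S, ∑ k, ν' k * (e i k : ℝ)) = ordJ e r ν') := by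
  subst hl
  simp only [ordJ_eq_minSum, linearIndependent_intCast_real_iff]
  exact (stmt7_general _ hj1 (hjn.trans_eq (Fintype.card_fin n).symm) hb
    hc1 (fun h => hc2 (h.trans_eq (Fintype.card_fin n)))
    hd1 (fun h => hd2 (h.trans_eq (Fintype.card_fin n)))).imp_right
    fun h r _ hr S hS hind => h r hr S ⟨hS, hind⟩
end
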